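/- For every Gauss code G: P_Ḡ(t) = P_G(t⁻¹), and P_{G*}(t) = − P_G(t⁻¹). That is, the Affine Index Polynomial replaces t by t⁻¹ when the orientation of the knot is reversed, and changes global sign together with t ↦ t⁻¹ when the knot is replaced by its mirror image. -/

import Mathlib

open Finset

/-- A Gauss code with `n` crossings: the `2*n` points are arranged in the cyclic order
`0, 1, …, 2*n - 1` on `Fin (2*n)`; each pair `(c, x)` of a crossing `c : Fin n` and a
label `x : Bool` (`true` = O = over, `false` = U = under) occupies a distinct point
`pt (c, x)`, and each crossing carries a sign `±1`. -/
structure GaussCode (n : ℕ) where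
  pt : Fin n × Bool → Fin (2 * n)
  inj : Function.Injective pt
  sign : Fin n → ℤ
  sign_unit : ∀ c, sign c = 1 ∨ sign c = -1

namespace GaussCode

/-- The cyclic distance from `i` forward to `j` in `Fin m`. -/
def cdist {m : ℕ} (i j : Fin m) : ℕ := (j.val + m - i.val) % m

/-- The cyclically next point after `i`. -/
def next {m : ℕ} (i : Fin m) : Fin m := ⟨(i.val + 1) % m, Nat.mod_lt _ i.pos⟩

variable {n : ℕ}

/-- `firstO G i c` holds when the first occurrence of the crossing `c`, reading the
points cyclically forward starting from the arc immediately preceding the point `i`,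
carries the label O. (Arcs are indexed by the point they immediately precede.) -/
def firstO (G : GaussCode n) (i : Fin (2 * n)) (c : Fin n) : Prop :=
  cdist i (G.pt (c, true)) < cdist i (G.pt (c, false))

instance (G : GaussCode n) (i : Fin (2 * n)) (c : Fin n) : Decidable (G.firstO i c) :=
  inferInstanceAs (Decidable (_ < _))

/-- The Cheng coloring `λ` of the arc immediately preceding the point `i`: the sum of
`ε c` over all crossings `c` whose first occurrence, reading cyclically forward from
this arc, carries the label O. -/
def lam (G : GaussCode n) (i : Fin (2 * n)) : ℤ :=
  ∑ c : Fin n, if G.firstO i c then G.sign c else 0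

/-- The writhe of a Gauss code: the sum of the signs of its crossings. -/
def wr (G : GaussCode n) : ℤ := ∑ c : Fin n, G.sign c

/-- The weight `W(c) = λ_O(c) - λ_U(c) - ε(c)` of a crossing `c`, where `λ_O(c)`
(resp. `λ_U(c)`) is `λ` of the arc immediately preceding the O (resp. U) point of `c`. -/
def W (G : GaussCode n) (c : Fin n) : ℤ :=
  G.lam (G.pt (c, true)) - G.lam (G.pt (c, false)) - G.sign c

open LaurentPolynomial in
/-- The affine index polynomial `P_G(t) = Σ_c ε(c) (t^{W(c)} - 1) ∈ ℤ[t,t⁻¹]`. -/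
noncomputable def P (G : GaussCode n) : LaurentPolynomial ℤ :=
  ∑ c : Fin n, G.sign c • (T (G.W c) - 1)

end GaussCode

namespace GaussCode

/-- The reverse `Ḡ` of a Gauss code `G`: the same points, labels and signs, but with
the reversed cyclic order.  The point at position `v` of `G` sits at position
`2*n - 1 - v` of `Ḡ`, so that the traversal order of `Ḡ` is the reverse of that of `G`.
It encodes the knot with reversed orientation; crossing signs are unchanged. -/
def rev {n : ℕ} (G : GaussCode n) : GaussCode n where
  pt := fun p => ⟨2 * n - 1 - (G.pt p).val, by have := (G.pt p).isLt; omega⟩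
  inj := by
    intro p q h
    apply G.inj
    have h1 := (G.pt p).isLt
    have h2 := (G.pt q).isLt
    rw [Fin.ext_iff] at h ⊢
    simp only at h
    omega
  sign := G.sign
  sign_unit := G.sign_unit

/-- The arc of the reverse code corresponding to a given arc: the arc of `G` between
the points at positions `i - 1` and `i` (the arc indexed by `i`) is, in `Ḡ`, the arc
between the points at positions `2*n - 1 - i` and `(2*n - i) % (2*n)`, hence is
indexed by `(2*n - i) % (2*n)`. -/
def revArc {m : ℕ} (i : Fin m) : Fin m := ⟨(m - i.val) % m, Nat.mod_lt _ i.pos⟩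

end GaussCode

namespace GaussCode

/-- The mirror image `G*` of a Gauss code `G`: the same points and cyclic order, but
with the labels O and U interchanged at every point and with every sign negated. -/
def mirror {n : ℕ} (G : GaussCode n) : GaussCode n where
  pt := fun p => G.pt (p.1, !p.2)
  inj := by
    rintro ⟨c₁, x₁⟩ ⟨c₂, x₂⟩ h
    have h' := G.inj h
    rw [Prod.ext_iff] at h' ⊢
    exact ⟨h'.1, by simpa using h'.2⟩
  sign := fun c => -G.sign c
  sign_unit := by
    intro c
    rcases G.sign_unit c with h | h <;> simp [h]

theorem cdist_eq_ite {m : ℕ} (i j : Fin m) :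
    cdist i j = if i.val ≤ j.val then j.val - i.val else j.val + m - i.val := by
  have hi := i.isLt
  have hj := j.isLt
  unfold cdist
  split_ifs with h
  · rw [show j.val + m - i.val = j.val - i.val + m by omega, Nat.add_mod_right]
    exact Nat.mod_eq_of_lt (by omega)
  · exact Nat.mod_eq_of_lt (by omega)

theorem pt_val_ne {n : ℕ} (G : GaussCode n) {p q : Fin n × Bool} (h : p ≠ q) :
    (G.pt p).val ≠ (G.pt q).val :=
  fun e => h (G.inj (Fin.ext e))

theorem firstO_pt_self {n : ℕ} (G : GaussCode n) (c : Fin n) (x : Bool) :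
    G.firstO (G.pt (c, x)) c ↔ x = true := by
  have ht := (G.pt (c, true)).isLt
  have hf := (G.pt (c, false)).isLt
  have hne := G.pt_val_ne (p := (c, true)) (q := (c, false)) (by simp)
  cases x <;> simp only [firstO, cdist_eq_ite] <;> split_ifs <;> simp <;> omega

theorem firstO_mirror {n : ℕ} (G : GaussCode n) (i : Fin (2 * n)) (c : Fin n) :
    G.mirror.firstO i c ↔ ¬ G.firstO i c := by
  have hi := i.isLt
  have ht := (G.pt (c, true)).isLt
  have hf := (G.pt (c, false)).isLt
  have hne := G.pt_val_ne (p := (c, true)) (q := (c, false)) (by simp)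
  simp only [firstO, mirror, cdist_eq_ite, Bool.not_true, Bool.not_false]
  split_ifs <;> omega

/-- Reading backwards from a point of a crossing other than `c` meets the two points of `c`
in the opposite order. -/
theorem firstO_rev_of_ne {n : ℕ} (G : GaussCode n) {c d : Fin n} (h : c ≠ d) (x : Bool) :
    G.rev.firstO (G.rev.pt (d, x)) c ↔ ¬ G.firstO (G.pt (d, x)) c := by
  have hi := (G.pt (d, x)).isLt
  have ht := (G.pt (c, true)).isLt
  have hf := (G.pt (c, false)).isLt
  have hne := G.pt_val_ne (p := (c, true)) (q := (c, false)) (by simp)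
  have hdt := G.pt_val_ne (p := (c, true)) (q := (d, x)) (by simp [h])
  have hdf := G.pt_val_ne (p := (c, false)) (q := (d, x)) (by simp [h])
  simp only [firstO, rev, cdist_eq_ite]
  split_ifs <;> omega

theorem lam_mirror {n : ℕ} (G : GaussCode n) (i : Fin (2 * n)) :
    G.mirror.lam i = G.lam i - G.wr := by
  simp only [lam, wr, ← Finset.sum_sub_distrib, firstO_mirror]
  refine Finset.sum_congr rfl fun c _ => ?_
  by_cases h : G.firstO i c <;> simp [h, mirror]

theorem lam_rev_pt {n : ℕ} (G : GaussCode n) (d : Fin n) (x : Bool) :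
    G.rev.lam (G.rev.pt (d, x)) =
      G.wr - G.lam (G.pt (d, x)) + if x then G.sign d else -G.sign d := by
  have hd : (if x then G.sign d else -G.sign d) =
      ∑ c, if c = d then (if x then G.sign d else -G.sign d) else 0 := by simp
  rw [hd]
  simp only [lam, wr, ← Finset.sum_sub_distrib, ← Finset.sum_add_distrib]
  refine Finset.sum_congr rfl fun c _ => ?_
  by_cases h : c = d
  · subst h
    simp only [firstO_pt_self]
    cases x <;> simp [rev]
  · simp only [G.firstO_rev_of_ne h, h, if_false]
    by_cases hO : G.firstO (G.pt (d, x)) c <;> simp [hO, rev]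

theorem W_rev {n : ℕ} (G : GaussCode n) (c : Fin n) : G.rev.W c = -G.W c := by
  have hs : G.rev.sign c = G.sign c := rfl
  simp only [W, lam_rev_pt, hs, if_true, Bool.false_eq_true, if_false]
  ring

theorem W_mirror {n : ℕ} (G : GaussCode n) (c : Fin n) : G.mirror.W c = -G.W c := by
  have hs : G.mirror.sign c = -G.sign c := rfl
  have ht : G.mirror.pt (c, true) = G.pt (c, false) := rfl
  have hf : G.mirror.pt (c, false) = G.pt (c, true) := rfl
  simp only [W, lam_mirror, hs, ht, hf]
  ring

open LaurentPolynomial in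
theorem invert_P {n : ℕ} (G : GaussCode n) :
    invert G.P = ∑ c, G.sign c • (T (-G.W c) - 1 : LaurentPolynomial ℤ) := by
  simp only [P, map_sum, map_zsmul, map_sub, invert_T, map_one]

open LaurentPolynomial in
/-- For every Gauss code `G`: `P_Ḡ(t) = P_G(t⁻¹)` and
`P_{G*}(t) = - P_G(t⁻¹)`, where `Ḡ` is the reverse and `G*` the mirror image of `G`,
and `t ↦ t⁻¹` is the substitution `LaurentPolynomial.invert`.  That is, the Affine
Index Polynomial replaces `t` by `t⁻¹` under orientation reversal, and changes global
sign together with `t ↦ t⁻¹` under mirror image. -/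
theorem P_rev_P_mirror {n : ℕ} (G : GaussCode n) :
    G.rev.P = invert G.P ∧ G.mirror.P = - invert G.P := by
  refine ⟨?_, ?_⟩
  · rw [invert_P]
    simp only [P, W_rev]
    rfl
  · rw [invert_P, ← Finset.sum_neg_distrib]
    refine Finset.sum_congr rfl fun c _ => ?_
    rw [W_mirror, ← neg_smul]
    rfl

end GaussCode
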